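/- Let f : [a,b] → ℝ be bounded with a finite number of (weak) local maximum points, local minimum points, and discontinuity points, and with essential range ER(f) = [inf_{[a,b]} f, sup_{[a,b]} f]. Let {Λ_n = {λ_{1,n},…,λ_{d_n,n}}}_n be a sequence of finite multisets of real numbers with d_n → ∞, and assume that {Λ_n} ∼ f and that Λ_n ⊆ f([a,b]) for every n. Then for every n there exist an asymptotically uniform grid {x_{i,n}}_{i=1,…,d_n} in [a,b] and a permutation τ_n of {1,…,d_n} such that λ_{τ_n(i),n} = f(x_{i,n}) for all i = 1,…,d_n. -/

import Mathlib

/-! The grid is produced by Hall's marriage theorem. Fix `K`, cut `[a, b]` into `K` cells of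
equal length, and call a slot `i` and an index `j` compatible if `λ_j = f y` for some `y ∈ [a, b]`
close to the `i`-th uniform grid point. A perfect matching between slots and indices is a grid
with small error, so only Hall's condition is needed.

Let `S` be a set of slots, `T` the set of cells it meets, and `Q ⊇ T` the set of cells equal or
adjacent to a cell of `T`. If `Q` contains every cell, then every index is compatible with some
slot of `S`, since all `λ_j` lie in `f([a, b])`. Otherwise `Q` has at least one cell more than
`T` (`card_nbrs`). The `λ_j` in the image under `f` of the cells of `Q` number at least about
`d_n |Q| / K ≥ d_n |T| / K + d_n / K` (`eventually_count`), whereas `|S|` is at most about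
`d_n |T| / K` (`card_fiber_le`), so the extra cell absorbs all errors for large `n`.

The lower bound on the count is a portmanteau argument: away from the finitely many local
extrema and discontinuities `f` is an open map (`isOpen_image_good`), by the intermediate value
theorem, so the image of a union of open cells minus these points is an open set. Uniformity
in `Q` is automatic because there are finitely many `Q`. -/

open MeasureTheory Filter

/-- Essential range of a real-valued function on a set. -/
def essRangeR (f : ℝ → ℝ) (s : Set ℝ) : Set ℝ :=
  {z : ℝ | ∀ ε > 0, 0 < volume {x ∈ s | |f x - z| < ε}}

/-! ### Open images and the portmanteau bound -/

/-- The restriction of `f` to an open set without discontinuities and local extrema is open. -/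
lemma isOpen_image_good (f : ℝ → ℝ) (W : Set ℝ) (hW : IsOpen W) (hc : ContinuousOn f W)
    (hmax : ∀ x ∈ W, ¬ IsLocalMax f x) (hmin : ∀ x ∈ W, ¬ IsLocalMin f x) :
    IsOpen (f '' W) := by
  rw [isOpen_iff_mem_nhds]
  rintro _ ⟨x, hx, rfl⟩
  obtain ⟨r, hr, hball⟩ := Metric.isOpen_iff.1 hW x hx
  have h1 := hmax x hx
  have h2 := hmin x hx
  have hb : Metric.ball x r ∈ nhds x := Metric.ball_mem_nhds x hr
  obtain ⟨u, hu, hu'⟩ : ∃ u ∈ Metric.ball x r, f x < f u := by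
    by_contra! h
    exact h1 (Filter.mem_of_superset hb h)
  obtain ⟨v, hv, hv'⟩ : ∃ v ∈ Metric.ball x r, f v < f x := by
    by_contra! h
    exact h2 (Filter.mem_of_superset hb h)
  have hpre : IsPreconnected (f '' Metric.ball x r) :=
    (convex_ball x r).isPreconnected.image f (hc.mono hball)
  have hsub : Set.Icc (f v) (f u) ⊆ f '' Metric.ball x r :=
    hpre.Icc_subset ⟨v, hv, rfl⟩ ⟨u, hu, rfl⟩
  exact Filter.mem_of_superset (Icc_mem_nhds hv' hu') (hsub.trans (Set.image_mono hball))

open Classical in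
/-- Portmanteau lower bound: asymptotically, the proportion of the `λ_j` in `f '' W` is at least
the normalized measure of `W`. -/
lemma eventually_count_open
    (a b : ℝ) (hab : a < b) (f : ℝ → ℝ)
    (hmeas : AEStronglyMeasurable f (volume.restrict (Set.Ioc a b)))
    (d : ℕ → ℕ) (lam : (n : ℕ) → Fin (d n) → ℝ)
    (hdist : ∀ F : ℂ → ℂ, Continuous F → HasCompactSupport F →
      Tendsto (fun n : ℕ => (∑ i : Fin (d n), F ((lam n i : ℝ) : ℂ)) / ((d n : ℕ) : ℂ)) atTop
        (nhds ((∫ x in a..b, F ((f x : ℝ) : ℂ)) / ((b - a : ℝ) : ℂ))))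
    (W : Set ℝ) (hW : IsOpen W) (hWab : W ⊆ Set.Ioc a b) (hc : ContinuousOn f W)
    (hfW : IsOpen (f '' W)) (η : ℝ) (hη : 0 < η) :
    ∀ᶠ n in atTop, volume.real W / (b - a) - η ≤
      ((Finset.univ.filter fun j : Fin (d n) => lam n j ∈ f '' W).card : ℝ) / d n := by
  have hba : 0 < b - a := sub_pos.2 hab
  have hWfin : volume W ≠ ⊤ := measure_ne_top_of_subset hWab (by simp)
  obtain ⟨C, hCW, hC, hCm⟩ : ∃ C ⊆ W, IsCompact C ∧
      volume.real W - η / 2 * (b - a) ≤ volume.real C := by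
    obtain ⟨C, hCW, hC, hlt⟩ := hW.measurableSet.exists_isCompact_lt_add hWfin
      (ε := ENNReal.ofReal (η / 2 * (b - a))) (by positivity)
    refine ⟨C, hCW, hC, ?_⟩
    have hCfin : volume C ≠ ⊤ := hC.measure_lt_top.ne
    have := ENNReal.toReal_mono (by simp [hCfin]) hlt.le
    rw [ENNReal.toReal_add hCfin (by simp), ENNReal.toReal_ofReal (by positivity)] at this
    simp only [Measure.real]
    linarith
  -- A cut-off on `ℂ` that is `1` on `f '' C` and, on the real line, is supported in `f '' W`.
  have hK : IsCompact ((fun x : ℝ => (x : ℂ)) '' (f '' C)) :=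
    (hC.image_of_continuousOn (hc.mono hCW)).image Complex.continuous_ofReal
  have hU : IsOpen (Complex.re ⁻¹' (f '' W)) := hfW.preimage Complex.continuous_re
  obtain ⟨g, hg1, hg0, hgc, hg01⟩ := exists_continuous_one_zero_of_isCompact hK
    hU.isClosed_compl (by
      rw [Set.disjoint_compl_right_iff_subset]
      rintro _ ⟨_, ⟨x, hx, rfl⟩, rfl⟩
      exact ⟨x, hCW hx, by simp⟩)
  have hT := hdist (fun z => ((g z : ℝ) : ℂ)) (by fun_prop)
    (hgc.comp_left (g := fun r : ℝ => (r : ℂ)) (by simp))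
  have hT' : Tendsto (fun n : ℕ => (∑ i : Fin (d n), g ((lam n i : ℝ) : ℂ)) / (d n : ℝ)) atTop
      (nhds ((∫ x in a..b, g ((f x : ℝ) : ℂ)) / (b - a))) := by
    have := (Complex.continuous_re.tendsto _).comp hT
    rw [intervalIntegral.integral_ofReal] at this
    convert this using 1
    · funext n
      simp only [Function.comp]
      rw [← Complex.ofReal_sum, ← Complex.ofReal_natCast, ← Complex.ofReal_div, Complex.ofReal_re]
    · rw [← Complex.ofReal_div, Complex.ofReal_re]
  have hint : volume.real C ≤ ∫ x in a..b, g ((f x : ℝ) : ℂ) := by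
    rw [intervalIntegral.integral_of_le hab.le]
    have hCm' := hC.measurableSet
    have h1 : volume.real C = ∫ x in Set.Ioc a b, C.indicator (fun _ => (1:ℝ)) x := by
      rw [integral_indicator hCm', Measure.restrict_restrict hCm', setIntegral_const,
        Set.inter_eq_left.2 (hCW.trans hWab), smul_eq_mul, mul_one]
    rw [h1]
    apply integral_mono_of_nonneg
    · filter_upwards with x
      exact Set.indicator_nonneg (fun _ _ => zero_le_one) x
    · refine Integrable.of_bound (C := 1) ?_ ?_
      · exact (g.continuous.comp Complex.continuous_ofReal).comp_aestronglyMeasurable hmeas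
      · filter_upwards with x
        rw [Real.norm_eq_abs, abs_of_nonneg (hg01 _).1]
        exact (hg01 _).2
    · filter_upwards with x
      by_cases hx : x ∈ C
      · rw [Set.indicator_of_mem hx, hg1 ⟨f x, ⟨x, hx, rfl⟩, rfl⟩]
        simp
      · rw [Set.indicator_of_notMem hx]
        exact (hg01 _).1
  have hlim : volume.real W / (b - a) - η < (∫ x in a..b, g ((f x : ℝ) : ℂ)) / (b - a) := by
    rw [lt_div_iff₀ hba, sub_mul, div_mul_cancel₀ _ hba.ne']
    nlinarith [mul_pos hη hba]
  filter_upwards [hT'.eventually (lt_mem_nhds hlim)] with n hn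
  refine hn.le.trans ?_
  gcongr
  rw [Finset.card_eq_sum_ones, Nat.cast_sum, Finset.sum_filter]
  apply Finset.sum_le_sum
  intro i _
  split_ifs with h
  · simpa using (hg01 _).2
  · apply le_of_eq
    apply hg0
    simpa using h

/-! ### Combinatorics of cells and slots -/

/-- The cells of `{0, …, K - 1}` equal or adjacent to a cell of `T`. -/
def nbrs (K : ℕ) (T : Finset ℕ) : Finset ℕ :=
  (Finset.range K).filter fun q => ∃ k ∈ T, q ≤ k + 1 ∧ k ≤ q + 1

lemma card_nbrs (K : ℕ) (T : Finset ℕ) (hT : T ⊆ Finset.range K) (hne : T.Nonempty)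
    (h : nbrs K T ≠ Finset.range K) : T.card + 1 ≤ (nbrs K T).card := by
  have hsub : T ⊆ nbrs K T := fun k hk => by
    simp only [nbrs, Finset.mem_filter]
    exact ⟨hT hk, k, hk, by omega, by omega⟩
  by_contra! hlt
  have heq : T = nbrs K T := Finset.eq_of_subset_of_card_le hsub (by omega)
  -- `T` is closed under passing to adjacent cells, hence is everything.
  have hcl : ∀ k ∈ T, ∀ q < K, q ≤ k + 1 → k ≤ q + 1 → q ∈ T := by
    intro k hk q hq h1 h2
    rw [heq]
    simp only [nbrs, Finset.mem_filter, Finset.mem_range]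
    exact ⟨hq, k, hk, h1, h2⟩
  obtain ⟨k0, hk0⟩ := hne
  have hk0K := Finset.mem_range.1 (hT hk0)
  have hdown : ∀ m ≤ k0, k0 - m ∈ T := by
    intro m
    induction m with
    | zero => intro _; simpa using hk0
    | succ m ih =>
      intro hm
      exact hcl _ (ih (by omega)) _ (by omega) (by omega) (by omega)
  have h0 : 0 ∈ T := by simpa using hdown k0 le_rfl
  have hall : ∀ q < K, q ∈ T := by
    intro q
    induction q with
    | zero => intro _; exact h0
    | succ q ih =>
      intro hq
      exact hcl _ (ih (by omega)) _ hq (by omega) (by omega)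
  apply h
  rw [← heq]
  exact Finset.Subset.antisymm hT fun q hq => hall q (Finset.mem_range.1 hq)

/-- At most `d / K + 1` of the `d` slots lie in a given cell. -/
lemma card_fiber_le (d K k : ℕ) (hK : 0 < K) (S : Finset (Fin d)) :
    (S.filter fun i : Fin d => (i : ℕ) * K / d = k).card ≤ d / K + 1 := by
  set m := (k * d + K - 1) / K with hm
  have hmK : k * d ≤ m * K := by
    have h1 := Nat.div_add_mod (k * d + K - 1) K
    have h2 := Nat.mod_lt (k * d + K - 1) hK
    rw [← hm] at h1
    nlinarith [Nat.sub_add_cancel (show 1 ≤ k * d + K by omega)]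
  calc (S.filter fun i : Fin d => (i : ℕ) * K / d = k).card
      ≤ (Finset.Ico m (m + (d / K + 1))).card := by
        apply Finset.card_le_card_of_injOn (fun i : Fin d => (i : ℕ))
        · intro i hi
          have hi' : (i : ℕ) * K / d = k := by
            have := Finset.mem_coe.1 hi
            exact (Finset.mem_filter.1 this).2
          have hd : 0 < d := i.pos
          have h1 : k * d ≤ i * K := by rw [← hi']; exact Nat.div_mul_le_self _ _
          have h2 : (i : ℕ) * K < (k + 1) * d := by
            rw [← Nat.div_lt_iff_lt_mul hd]; omega
          simp only [Finset.coe_Ico, Set.mem_Ico]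
          constructor
          · rw [hm, ← Nat.lt_succ_iff, Nat.div_lt_iff_lt_mul hK]
            have : (i + 1) * K = i * K + K := by ring
            simp only [Nat.succ_eq_add_one]
            omega
          · by_contra! hge
            have h3 : d < (d / K + 1) * K := by
              rw [← Nat.div_lt_iff_lt_mul hK]; omega
            have h4 : (m + (d / K + 1)) * K ≤ i * K := Nat.mul_le_mul_right K hge
            nlinarith
        · intro i _ j _ h
          exact Fin.ext h
    _ = d / K + 1 := by simp

/-! ### Counting values over unions of cells -/

/-- The union of the open cells with index in `Q`, out of `K` cells of `[a, b]`, without the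
points of `B`. -/
def cells (a b : ℝ) (K : ℕ) (B : Set ℝ) (Q : Finset ℕ) : Set ℝ :=
  (⋃ k ∈ Q, Set.Ioo (a + k * ((b - a) / K)) (a + (k + 1) * ((b - a) / K))) \ B

lemma volume_cells (a b : ℝ) (hab : a < b) (K : ℕ) (hK : 0 < K) (B : Set ℝ) (hB : B.Finite)
    (Q : Finset ℕ) : volume.real (cells a b K B Q) = Q.card * ((b - a) / K) := by
  have hL : 0 < (b - a) / K := div_pos (sub_pos.2 hab) (by exact_mod_cast hK)
  set L := (b - a) / K
  have hdisj : (Q : Set ℕ).PairwiseDisjoint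
      fun k : ℕ => Set.Ioo (a + k * L) (a + (k + 1) * L) := by
    intro k _ l _ hkl
    rw [Function.onFun, Set.disjoint_left]
    rintro x ⟨h1, h2⟩ ⟨h3, h4⟩
    rcases Nat.lt_or_gt_of_ne hkl with h | h
    · have : (k : ℝ) + 1 ≤ l := by exact_mod_cast h
      nlinarith
    · have : (l : ℝ) + 1 ≤ k := by exact_mod_cast h
      nlinarith
  rw [cells, Measure.real, measure_sdiff_null (hB.measure_zero volume),
    measure_biUnion_finset hdisj (fun _ _ => measurableSet_Ioo)]
  have : ∀ k : ℕ, volume (Set.Ioo (a + k * L) (a + (k + 1) * L)) = ENNReal.ofReal L := by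
    intro k
    rw [Real.volume_Ioo]
    congr 1
    ring
  simp only [this, Finset.sum_const, nsmul_eq_mul, ENNReal.toReal_mul, ENNReal.toReal_natCast,
    ENNReal.toReal_ofReal hL.le]

lemma mem_cells {a b : ℝ} {K : ℕ} {B : Set ℝ} {Q : Finset ℕ} {x : ℝ} (h : x ∈ cells a b K B Q) :
    (∃ k ∈ Q, a + k * ((b - a) / K) ≤ x ∧ x ≤ a + (k + 1) * ((b - a) / K)) ∧ x ∉ B := by
  obtain ⟨h1, h2⟩ := h
  simp only [Set.mem_iUnion] at h1
  obtain ⟨k, hk, h3⟩ := h1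
  exact ⟨⟨k, hk, h3.1.le, h3.2.le⟩, h2⟩

lemma cells_subset (a b : ℝ) (hab : a < b) (K : ℕ) (B : Set ℝ) (Q : Finset ℕ)
    (hQ : Q ⊆ Finset.range K) : cells a b K B Q ⊆ Set.Ioo a b := by
  rintro x ⟨h, -⟩
  simp only [Set.mem_iUnion] at h
  obtain ⟨k, hk, h1, h2⟩ := h
  have hkK : k < K := Finset.mem_range.1 (hQ hk)
  have hK : (0 : ℝ) < K := by exact_mod_cast (by omega : 0 < K)
  have hk1 : (k : ℝ) + 1 ≤ K := by exact_mod_cast hkK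
  have hL : 0 < (b - a) / K := div_pos (sub_pos.2 hab) hK
  have hLK : K * ((b - a) / K) = b - a := by field_simp
  have hk0 : (0 : ℝ) ≤ k := k.cast_nonneg
  constructor
  · nlinarith
  · nlinarith

open Classical in
/-- For large `n`, simultaneously for all sets `Q` of cells, the proportion of the `λ_j` that are
values of `f` on the cells of `Q` is at least `|Q| / K` up to half a cell. -/
lemma eventually_count
    (a b : ℝ) (hab : a < b) (f : ℝ → ℝ)
    (hmax_fin : {x ∈ Set.Icc a b | IsLocalMaxOn f (Set.Icc a b) x}.Finite)
    (hmin_fin : {x ∈ Set.Icc a b | IsLocalMinOn f (Set.Icc a b) x}.Finite)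
    (hdisc_fin : {x ∈ Set.Icc a b | ¬ ContinuousWithinAt f (Set.Icc a b) x}.Finite)
    (d : ℕ → ℕ) (lam : (n : ℕ) → Fin (d n) → ℝ)
    (hdist : ∀ F : ℂ → ℂ, Continuous F → HasCompactSupport F →
      Tendsto (fun n : ℕ => (∑ i : Fin (d n), F ((lam n i : ℝ) : ℂ)) / ((d n : ℕ) : ℂ)) atTop
        (nhds ((∫ x in a..b, F ((f x : ℝ) : ℂ)) / ((b - a : ℝ) : ℂ))))
    (K : ℕ) (hK : 0 < K) :
    ∃ B : Set ℝ, ∀ᶠ n in atTop, ∀ Q ⊆ Finset.range K, (Q.card : ℝ) / K - 1 / (2 * K) ≤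
      ((Finset.univ.filter fun j : Fin (d n) => lam n j ∈ f '' cells a b K B Q).card : ℝ)
        / d n := by
  have hba : 0 < b - a := sub_pos.2 hab
  have hK' : (0 : ℝ) < K := by exact_mod_cast hK
  set D := {x ∈ Set.Icc a b | ¬ ContinuousWithinAt f (Set.Icc a b) x} with hD
  set B := ({x ∈ Set.Icc a b | IsLocalMaxOn f (Set.Icc a b) x} ∪
    {x ∈ Set.Icc a b | IsLocalMinOn f (Set.Icc a b) x}) ∪ D with hBdef
  have hB : B.Finite := (hmax_fin.union hmin_fin).union hdisc_fin
  refine ⟨B, ?_⟩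
  have hmeas : AEStronglyMeasurable f (volume.restrict (Set.Ioc a b)) := by
    have hDm : MeasurableSet (Set.Ioc a b \ D) := measurableSet_Ioc.diff hdisc_fin.measurableSet
    have hcont : ContinuousOn f (Set.Ioc a b \ D) := by
      rintro x ⟨hx, hxD⟩
      have hx' := Set.Ioc_subset_Icc_self hx
      have : ContinuousWithinAt f (Set.Icc a b) x := by
        by_contra h
        exact hxD ⟨hx', h⟩
      exact this.mono (Set.sdiff_subset.trans Set.Ioc_subset_Icc_self)
    have hae : (Set.Ioc a b \ D : Set ℝ) =ᵐ[volume] Set.Ioc a b :=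
      sdiff_null_ae_eq_self (hdisc_fin.measure_zero volume)
    rw [← Measure.restrict_congr_set hae]
    exact hcont.aestronglyMeasurable hDm
  have hev : ∀ Q ∈ (Finset.range K).powerset, ∀ᶠ n in atTop, (Q.card : ℝ) / K - 1 / (2 * K) ≤
      ((Finset.univ.filter fun j : Fin (d n) => lam n j ∈ f '' cells a b K B Q).card : ℝ)
        / d n := by
    intro Q hQ
    have hsub := cells_subset a b hab K B Q (Finset.mem_powerset.1 hQ)
    have hopen : IsOpen (cells a b K B Q) :=
      (isOpen_biUnion fun _ _ => isOpen_Ioo).sdiff hB.isClosed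
    have hIcc : ∀ x ∈ cells a b K B Q, x ∈ Set.Icc a b := fun x hx =>
      Set.Ioo_subset_Icc_self (hsub hx)
    have hc : ContinuousOn f (cells a b K B Q) := by
      intro x hx
      have : ContinuousWithinAt f (Set.Icc a b) x := by
        by_contra h
        exact (mem_cells hx).2 (Or.inr ⟨hIcc x hx, h⟩)
      exact this.mono fun y hy => hIcc y hy
    have hfo : IsOpen (f '' cells a b K B Q) := by
      apply isOpen_image_good f _ hopen hc
      · exact fun x hx h => (mem_cells hx).2 (Or.inl (Or.inl ⟨hIcc x hx, h.on _⟩))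
      · exact fun x hx h => (mem_cells hx).2 (Or.inl (Or.inr ⟨hIcc x hx, h.on _⟩))
    have := eventually_count_open a b hab f hmeas d lam hdist (cells a b K B Q) hopen
      (hsub.trans Set.Ioo_subset_Ioc_self) hc hfo (1 / (2 * K)) (by positivity)
    rw [volume_cells a b hab K hK B hB Q] at this
    have e : (Q.card : ℝ) * ((b - a) / K) / (b - a) = Q.card / K := by field_simp
    rwa [e] at this
  filter_upwards [(Filter.eventually_all_finset _).2 hev] with n hn Q hQ
  exact hn Q (Finset.mem_powerset.2 hQ)

/-! ### The matching -/

/-- The distance estimate between a point of a cell adjacent to that of slot `i` and the `i`-th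
uniform grid point. -/
lemma dist_grid (a b : ℝ) (hab : a < b) (d K : ℕ) (hdK : K ≤ d) (i : Fin d) (q : ℕ)
    (h1 : q ≤ (i : ℕ) * K / d + 1) (h2 : (i : ℕ) * K / d ≤ q + 1) (hK : 0 < K) (y : ℝ)
    (hy1 : a + q * ((b - a) / K) ≤ y) (hy2 : y ≤ a + (q + 1) * ((b - a) / K)) :
    |y - (a + ((i : ℕ) + 1) * (b - a) / (d + 1))| ≤ 3 * ((b - a) / K) := by
  have hd : 0 < d := i.pos
  have hK' : (0 : ℝ) < K := by exact_mod_cast hK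
  have hd' : (0 : ℝ) < d := by exact_mod_cast hd
  have hL : 0 < (b - a) / K := div_pos (sub_pos.2 hab) hK'
  set k := (i : ℕ) * K / d with hk
  have e1 : (k : ℝ) * d ≤ i * K := by
    exact_mod_cast Nat.div_mul_le_self _ _
  have e2 : (i : ℝ) * K < (k + 1) * d := by
    exact_mod_cast (Nat.div_lt_iff_lt_mul hd).1 (by omega : (i : ℕ) * K / d < k + 1)
  have e3 : (i : ℝ) + 1 ≤ d := by exact_mod_cast i.2
  have e4 : (K : ℝ) ≤ d := by exact_mod_cast hdK
  -- The grid point lies in cell `k` or the following one.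
  have g1 : (k : ℝ) ≤ ((i : ℕ) + 1) * K / (d + 1) := by
    rw [le_div_iff₀ (by positivity)]
    have : (k : ℝ) ≤ K := by
      have : (k : ℝ) * d ≤ K * d := by nlinarith
      exact le_of_mul_le_mul_right this hd'
    nlinarith
  have g2 : ((i : ℕ) + 1) * (K : ℝ) / (d + 1) ≤ k + 2 := by
    rw [div_le_iff₀ (by positivity)]
    nlinarith [(k.cast_nonneg : (0 : ℝ) ≤ k)]
  have eg : ((i : ℕ) + 1) * (b - a) / (d + 1) =
      ((i : ℕ) + 1) * (K : ℝ) / (d + 1) * ((b - a) / K) := by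
    field_simp
  rw [eg]
  set g := ((i : ℕ) + 1) * (K : ℝ) / (d + 1)
  have f1 : (q : ℝ) ≤ k + 1 := by exact_mod_cast h1
  have f2 : (k : ℝ) ≤ q + 1 := by exact_mod_cast h2
  rw [abs_le]
  constructor
  · nlinarith
  · nlinarith

/-- Every `x ∈ [a, b]` lies in a closed cell. -/
lemma exists_cell (a b : ℝ) (hab : a < b) (K : ℕ) (hK : 0 < K) (x : ℝ) (hx : x ∈ Set.Icc a b) :
    ∃ q < K, a + q * ((b - a) / K) ≤ x ∧ x ≤ a + (q + 1) * ((b - a) / K) := by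
  have hK' : (0 : ℝ) < K := by exact_mod_cast hK
  have hL : 0 < (b - a) / K := div_pos (sub_pos.2 hab) hK'
  have hLK : K * ((b - a) / K) = b - a := by field_simp
  set L := (b - a) / K
  by_cases h : ⌊(x - a) / L⌋₊ < K
  · refine ⟨_, h, ?_, ?_⟩
    · have := Nat.floor_le (div_nonneg (sub_nonneg.2 hx.1) hL.le)
      rw [le_div_iff₀ hL] at this
      linarith
    · have := (Nat.lt_floor_add_one ((x - a) / L)).le
      rw [div_le_iff₀ hL] at this
      linarith
  · have h1 : (K : ℝ) ≤ (x - a) / L := by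
      rw [← Nat.le_floor_iff (div_nonneg (sub_nonneg.2 hx.1) hL.le)]
      omega
    rw [le_div_iff₀ hL] at h1
    have hc : ((K - 1 : ℕ) : ℝ) + 1 = K := by
      exact_mod_cast Nat.sub_add_cancel hK
    refine ⟨K - 1, by omega, ?_, ?_⟩
    · nlinarith
    · rw [hc]
      linarith [hx.2]

open Classical in
/-- Hall's marriage theorem at a fixed `n`: if the `λ_j` are numerous enough on every set of
cells, they can be arranged along a grid within three cell lengths of the uniform one. -/
lemma exists_grid (a b : ℝ) (hab : a < b) (f : ℝ → ℝ) (d K : ℕ) (hK : 0 < K)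
    (hdK : 2 * K ^ 2 ≤ d) (lam : Fin d → ℝ) (hloc : ∀ i, lam i ∈ f '' Set.Icc a b) (B : Set ℝ)
    (hcount : ∀ Q ⊆ Finset.range K, (Q.card : ℝ) / K - 1 / (2 * K) ≤
      ((Finset.univ.filter fun j : Fin d => lam j ∈ f '' cells a b K B Q).card : ℝ) / d) :
    ∃ (x : Fin d → ℝ) (τ : Equiv.Perm (Fin d)), (∀ i, x i ∈ Set.Icc a b) ∧
      (∀ i, |x i - (a + ((i : ℕ) + 1) * (b - a) / (d + 1))| ≤ 3 * ((b - a) / K)) ∧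
      (∀ i, lam (τ i) = f (x i)) := by
  have hKd : K ≤ d := by nlinarith
  have hd : 0 < d := by omega
  have hK' : (0 : ℝ) < K := by exact_mod_cast hK
  have hd' : (0 : ℝ) < d := by exact_mod_cast hd
  let t : Fin d → Finset (Fin d) := fun i => Finset.univ.filter fun j =>
    ∃ y ∈ Set.Icc a b, |y - (a + ((i : ℕ) + 1) * (b - a) / (d + 1))| ≤ 3 * ((b - a) / K) ∧
      lam j = f y
  have hall : ∀ S : Finset (Fin d), S.card ≤ (S.biUnion t).card := by
    intro S
    rcases S.eq_empty_or_nonempty with rfl | hS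
    · simp
    set T : Finset ℕ := S.image fun i : Fin d => (i : ℕ) * K / d with hTdef
    have hT : T ⊆ Finset.range K := by
      intro k hk
      obtain ⟨i, _, rfl⟩ := Finset.mem_image.1 hk
      rw [Finset.mem_range, Nat.div_lt_iff_lt_mul hd, mul_comm]
      exact Nat.mul_lt_mul_of_pos_left i.2 hK
    have hTne : T.Nonempty := hS.image _
    have hmem : ∀ q ∈ nbrs K T, ∀ j, ∀ y ∈ Set.Icc a b, a + q * ((b - a) / K) ≤ y →
        y ≤ a + (q + 1) * ((b - a) / K) → lam j = f y → j ∈ S.biUnion t := by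
      intro q hq j y hy h1 h2 hj
      obtain ⟨_, k, hk, h3, h4⟩ := Finset.mem_filter.1 hq
      obtain ⟨i, hi, rfl⟩ := Finset.mem_image.1 hk
      refine Finset.mem_biUnion.2 ⟨i, hi, Finset.mem_filter.2 ⟨Finset.mem_univ _, y, hy, ?_, hj⟩⟩
      exact dist_grid a b hab d K hKd i q h3 h4 hK y h1 h2
    by_cases hN : nbrs K T = Finset.range K
    · have : S.biUnion t = Finset.univ := by
        rw [Finset.eq_univ_iff_forall]
        intro j
        obtain ⟨y, hy, hyj⟩ := hloc j
        obtain ⟨q, hq, h1, h2⟩ := exists_cell a b hab K hK y hy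
        exact hmem q (by rw [hN]; exact Finset.mem_range.2 hq) j y hy h1 h2 hyj.symm
      rw [this]
      exact Finset.card_le_card (Finset.subset_univ _)
    · have hcard := card_nbrs K T hT hTne hN
      have hQ : nbrs K T ⊆ Finset.range K := Finset.filter_subset _ _
      have hc := hcount _ hQ
      have hsub : (Finset.univ.filter fun j : Fin d => lam j ∈ f '' cells a b K B (nbrs K T))
          ⊆ S.biUnion t := by
        intro j hj
        obtain ⟨y, hy, hyj⟩ := (Finset.mem_filter.1 hj).2
        obtain ⟨⟨q, hq, h1, h2⟩, _⟩ := mem_cells hy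
        exact hmem q hq j y (Set.Ioo_subset_Icc_self (cells_subset a b hab K B _ hQ hy))
          h1 h2 hyj.symm
      have hle := Finset.card_le_card hsub
      have hS1 : S.card ≤ T.card * (d / K + 1) := by
        rw [Finset.card_eq_sum_card_image (fun i : Fin d => (i : ℕ) * K / d) S, ← smul_eq_mul]
        exact Finset.sum_le_card_nsmul _ _ _ fun k _ => card_fiber_le d K k hK S
      have hS2 : (S.card : ℝ) ≤ T.card * ((d : ℝ) / K + 1) := by
        calc (S.card : ℝ) ≤ ((T.card * (d / K + 1) : ℕ) : ℝ) := by exact_mod_cast hS1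
          _ ≤ T.card * ((d : ℝ) / K + 1) := by
            push_cast
            gcongr
            exact Nat.cast_div_le
      have hTK : (T.card : ℝ) ≤ K := by
        have := Finset.card_le_card hT
        rw [Finset.card_range] at this
        exact_mod_cast this
      have hcard' : (T.card : ℝ) + 1 ≤ (nbrs K T).card := by exact_mod_cast hcard
      rw [le_div_iff₀ hd'] at hc
      have hle' : ((Finset.univ.filter fun j : Fin d =>
          lam j ∈ f '' cells a b K B (nbrs K T)).card : ℝ) ≤ (S.biUnion t).card := by
        exact_mod_cast hle
      -- The half cell left over after the counting error exceeds the rounding error `|T| ≤ K`.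
      have hKd2 : (K : ℝ) ≤ d / (2 * K) := by
        rw [le_div_iff₀ (by positivity)]
        have : (2 * (K : ℝ) ^ 2) ≤ d := by exact_mod_cast hdK
        nlinarith
      have h5 : (T.card : ℝ) * (d / K) + d / (2 * K) ≤
          ((nbrs K T).card / K - 1 / (2 * K)) * d := by
        have h6 : ((T.card : ℝ) + 1) * (d / K) ≤ (nbrs K T).card * (d / K) := by gcongr
        have h7 : ((nbrs K T).card / K - 1 / (2 * K)) * (d : ℝ) =
            (nbrs K T).card * (d / K) - d / (2 * K) := by field_simp
        have h8 : (d : ℝ) / K = 2 * (d / (2 * K)) := by field_simp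
        rw [h7]
        linarith
      have : (S.card : ℝ) ≤ (S.biUnion t).card := by linarith
      exact_mod_cast this
  obtain ⟨τ, hinj, hτ⟩ := (Finset.all_card_le_biUnion_card_iff_exists_injective t).1 hall
  have hτ' : ∀ i : Fin d, ∃ y ∈ Set.Icc a b,
      |y - (a + ((i : ℕ) + 1) * (b - a) / (d + 1))| ≤ 3 * ((b - a) / K) ∧ lam (τ i) = f y :=
    fun i => (Finset.mem_filter.1 (hτ i)).2
  choose x hx1 hx2 hx3 using hτ'
  exact ⟨x, Equiv.ofBijective τ (Finite.injective_iff_bijective.1 hinj), hx1, hx2, hx3⟩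

/-- Let `f : [a,b] → ℝ` be bounded with finitely many (weak) local max
points, local min points and discontinuity points, and essential range `[inf f, sup f]`.
Let `{Λ_n}` be multisets of reals with `{Λ_n} ∼ f` and `Λ_n ⊆ f([a,b])`.  Then for every
`n` there exist an asymptotically uniform grid `{x_{i,n}}` in `[a,b]` and a permutation
`τ_n` with `λ_{τ_n(i),n} = f(x_{i,n})` for all `i`. -/
theorem stmt17
    (a b : ℝ) (hab : a < b) (f : ℝ → ℝ)
    (hf_bdd : ∃ C : ℝ, ∀ x ∈ Set.Icc a b, |f x| ≤ C)
    (hmax_fin : {x ∈ Set.Icc a b | IsLocalMaxOn f (Set.Icc a b) x}.Finite)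
    (hmin_fin : {x ∈ Set.Icc a b | IsLocalMinOn f (Set.Icc a b) x}.Finite)
    (hdisc_fin : {x ∈ Set.Icc a b | ¬ ContinuousWithinAt f (Set.Icc a b) x}.Finite)
    (hER : essRangeR f (Set.Icc a b)
      = Set.Icc (sInf (f '' Set.Icc a b)) (sSup (f '' Set.Icc a b)))
    (d : ℕ → ℕ) (hd : Tendsto d atTop atTop)
    (lam : (n : ℕ) → Fin (d n) → ℝ)
    (hdist : ∀ F : ℂ → ℂ, Continuous F → HasCompactSupport F →
      Tendsto (fun n : ℕ => (∑ i : Fin (d n), F ((lam n i : ℝ) : ℂ)) / ((d n : ℕ) : ℂ)) atTop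
        (nhds ((∫ x in a..b, F ((f x : ℝ) : ℂ)) / ((b - a : ℝ) : ℂ))))
    (hloc : ∀ n : ℕ, ∀ i : Fin (d n), lam n i ∈ f '' Set.Icc a b) :
    ∃ (x : (n : ℕ) → Fin (d n) → ℝ) (τ : (n : ℕ) → Equiv.Perm (Fin (d n))),
      (∀ n : ℕ, ∀ i : Fin (d n), x n i ∈ Set.Icc a b) ∧
      (∀ ε > (0:ℝ), ∃ N : ℕ, ∀ n ≥ N, ∀ i : Fin (d n),
        |x n i - (a + ((i : ℕ) + 1) * (b - a) / (d n + 1))| < ε) ∧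
      (∀ n : ℕ, ∀ i : Fin (d n), lam n (τ n i) = f (x n i)) := by
  classical
  have hba : 0 < b - a := sub_pos.2 hab
  let P : ℕ → ℝ → Prop := fun n e => ∃ (x : Fin (d n) → ℝ) (τ : Equiv.Perm (Fin (d n))),
    (∀ i, x i ∈ Set.Icc a b) ∧
    (∀ i, |x i - (a + ((i : ℕ) + 1) * (b - a) / (d n + 1))| < e) ∧
    (∀ i, lam n (τ i) = f (x i))
  have key : ∀ e > 0, ∃ N, ∀ n ≥ N, P n e := by
    intro e he
    obtain ⟨K, hKe⟩ := exists_nat_gt (3 * (b - a) / e)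
    have hK' : (0 : ℝ) < K := lt_trans (by positivity) hKe
    have hK : 0 < K := by exact_mod_cast hK'
    obtain ⟨B, hB⟩ := eventually_count a b hab f hmax_fin hmin_fin hdisc_fin d lam hdist K hK
    obtain ⟨N, hN⟩ := Filter.eventually_atTop.1
      (hB.and (hd.eventually_ge_atTop (2 * K ^ 2)))
    refine ⟨N, fun n hn => ?_⟩
    obtain ⟨h1, h2⟩ := hN n hn
    obtain ⟨x, τ, hx, hdis, hτ⟩ := exists_grid a b hab f (d n) K hK h2 (lam n) (hloc n) B h1
    refine ⟨x, τ, hx, fun i => (hdis i).trans_lt ?_, hτ⟩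
    rw [div_lt_iff₀ he] at hKe
    rw [← mul_div_assoc, div_lt_iff₀ hK']
    linarith
  -- For each `n`, take the grid with the best error bound `1 / (k + 1)` available with `k ≤ n`.
  let m : ℕ → ℕ := fun n => Nat.findGreatest (fun k => P n (1 / ((k : ℝ) + 1))) n
  have hsel : ∀ n, ∃ (x : Fin (d n) → ℝ) (τ : Equiv.Perm (Fin (d n))),
      (∀ i, x i ∈ Set.Icc a b) ∧ (∀ i, lam n (τ i) = f (x i)) ∧
      (P n (1 / ((m n : ℝ) + 1)) →
        ∀ i, |x i - (a + ((i : ℕ) + 1) * (b - a) / (d n + 1))| < 1 / ((m n : ℝ) + 1)) := by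
    intro n
    by_cases h : P n (1 / ((m n : ℝ) + 1))
    · obtain ⟨x, τ, h1, h2, h3⟩ := h
      exact ⟨x, τ, h1, h3, fun _ => h2⟩
    · choose x hx using hloc n
      exact ⟨x, Equiv.refl _, fun i => (hx i).1, fun i => (hx i).2.symm, fun h' => absurd h' h⟩
  choose x τ hx hτ hbest using hsel
  refine ⟨x, τ, hx, ?_, hτ⟩
  intro e he
  obtain ⟨k, hk⟩ := exists_nat_one_div_lt he
  obtain ⟨N, hN⟩ := key (1 / ((k : ℝ) + 1)) (by positivity)
  refine ⟨max N k, fun n hn i => ?_⟩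
  have hPk : P n (1 / ((k : ℝ) + 1)) := hN n (le_trans (le_max_left _ _) hn)
  have hkn : k ≤ n := le_trans (le_max_right _ _) hn
  have hspec : P n (1 / ((m n : ℝ) + 1)) :=
    Nat.findGreatest_spec (P := fun k => P n (1 / ((k : ℝ) + 1))) hkn hPk
  have hkm : k ≤ m n :=
    Nat.le_findGreatest (P := fun k => P n (1 / ((k : ℝ) + 1))) hkn hPk
  refine (hbest n hspec i).trans_le (le_trans ?_ hk.le)
  have : (k : ℝ) ≤ m n := by exact_mod_cast hkm
  gcongr
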